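/- Let G be a finite r-regular graph on n vertices with girth g, equipped with a random label assignment with probabilities (p₀,p), and let N be a positive integer with 2N < g−3. Let P = R_{≤N} and let P̄ be obtained from P by deleting both endpoints of every edge of G whose two endpoints have equal relevant labels. Then the expected cardinality of P̄ satisfies E|P̄| ≥ p₀·(1−p₀)^r·n + Σ_{i=1}^{N} p·(1−p)^r·b_{i−1}·n. -/

import Mathlib

open MeasureTheory ProbabilityTheory Filter Set

namespace InducedForest

variable {V : Type*}

/-- Label `i` is *relevant* for vertex `v` (w.r.t. the label assignment `S`):
either `i = 0` and `0 ∈ S v`, or `i ∈ S v`, no `j < i` is relevant for `v`, and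
there is a unique neighbour of `v` having a relevant label strictly smaller than `i`. -/
def Relevant (G : SimpleGraph V) (S : V → Set ℕ) (i : ℕ) : V → Prop :=
  Nat.strongRecOn i (fun i ih v =>
    (i = 0 ∧ 0 ∈ S v) ∨
    (i ∈ S v ∧ (∀ j, (h : j < i) → ¬ ih j h v) ∧
      (∃! u, G.Adj v u ∧ ∃ j, ∃ h : j < i, ih j h u)))

/-- `v` has some relevant label `≤ l`, i.e. `v ∈ R_{≤ l}`. -/
def RelevantLe (G : SimpleGraph V) (S : V → Set ℕ) (l : ℕ) (v : V) : Prop :=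
  ∃ i ≤ l, Relevant G S i v

inductive Colour | white | blue | orange | purple
deriving DecidableEq

open Classical in
/-- The colour of `u` at time `l`. -/
noncomputable def colourAt (G : SimpleGraph V) (S : V → Set ℕ) (l : ℕ) (u : V) : Colour :=
  if RelevantLe G S l u then Colour.purple
  else if ∀ v, G.Adj u v → ¬ RelevantLe G S l v then Colour.white
  else if ∃! v, G.Adj u v ∧ RelevantLe G S l v then Colour.blue
  else Colour.orange

/-- The set `W_l` of white vertices at time `l`. -/
def White (G : SimpleGraph V) (S : V → Set ℕ) (l : ℕ) : Set V :=
  {u | ¬ RelevantLe G S l u ∧ ∀ v, G.Adj u v → ¬ RelevantLe G S l v}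

/-- The set `B_l` of blue vertices at time `l`. -/
def Blue (G : SimpleGraph V) (S : V → Set ℕ) (l : ℕ) : Set V :=
  {u | ¬ RelevantLe G S l u ∧ ∃! v, G.Adj u v ∧ RelevantLe G S l v}
/-- The label assignment determined by a sample point `ω`. -/
def labels (ω : V → ℕ → Bool) : V → Set ℕ := fun v => {i | ω v i = true}

/-- `μ` is the random label assignment with probabilities `(p₀, p)`: the events
`i ∈ S(v)` are mutually independent, and each has probability `p₀` if `i = 0`
and `p` if `i ≥ 1`. -/
def IsLabelMeasure (μ : Measure (V → ℕ → Bool)) (p₀ p : ℝ) : Prop :=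
  IsProbabilityMeasure μ ∧
  iIndepSet (fun q : V × ℕ => {ω : V → ℕ → Bool | ω q.1 q.2 = true}) μ ∧
  ∀ (v : V) (i : ℕ), μ {ω | ω v i = true} = ENNReal.ofReal (if i = 0 then p₀ else p)

/-- Event that `u` is white at time `l`. -/
def WEv (G : SimpleGraph V) (l : ℕ) (u : V) : Set (V → ℕ → Bool) :=
  {ω | u ∈ White G (labels ω) l}

/-- Event that `u` is blue at time `l`. -/
def BEv (G : SimpleGraph V) (l : ℕ) (u : V) : Set (V → ℕ → Bool) :=
  {ω | u ∈ Blue G (labels ω) l}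

/-- Event that `u` has relevant label `i`, i.e. `u ∈ R_i`. -/
def REv (G : SimpleGraph V) (i : ℕ) (u : V) : Set (V → ℕ → Bool) :=
  {ω | Relevant G (labels ω) i u}

/-- Event that `u` has a relevant label `≤ l`, i.e. `u ∈ R_{≤ l}`. -/
def RLeEv (G : SimpleGraph V) (l : ℕ) (u : V) : Set (V → ℕ → Bool) :=
  {ω | RelevantLe G (labels ω) l u}

/-- `G` is `r`-regular. -/
def IsRegular (G : SimpleGraph V) (r : ℕ) : Prop :=
  ∀ v : V, (G.neighborSet v).ncard = r
/-- The set `P̄`: vertices with a relevant label `≤ N`, with both endpoints of every edge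
whose two endpoints have equal relevant labels deleted. -/
def Pbar (G : SimpleGraph V) (S : V → Set ℕ) (N : ℕ) : Set V :=
  {v | RelevantLe G S N v ∧
    ∀ x, G.Adj v x → ∀ i, Relevant G S i v → ¬ Relevant G S i x}

theorem path_unique_of_girth {G : SimpleGraph V} {g : ℕ} (hg : (g : ℕ∞) ≤ G.egirth)
    {x y : V} (p q : G.Walk x y) (hp : p.IsPath) (hq : q.IsPath)
    (hlen : p.length + q.length < g) : p = q := by
  classical
  let H : SimpleGraph V := SimpleGraph.fromEdgeSet {e | e ∈ p.edges ∨ e ∈ q.edges}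
  have hHG : H.edgeSet ⊆ {e | e ∈ p.edges ∨ e ∈ q.edges} := by
    intro e he
    simp only [H, SimpleGraph.edgeSet_fromEdgeSet] at he
    exact he.1
  have hpe : ∀ e ∈ p.edges, e ∈ H.edgeSet := by
    intro e he
    simp only [H, SimpleGraph.edgeSet_fromEdgeSet]
    exact ⟨Or.inl he, G.not_isDiag_of_mem_edgeSet (p.edges_subset_edgeSet he)⟩
  have hqe : ∀ e ∈ q.edges, e ∈ H.edgeSet := by
    intro e he
    simp only [H, SimpleGraph.edgeSet_fromEdgeSet]
    exact ⟨Or.inr he, G.not_isDiag_of_mem_edgeSet (q.edges_subset_edgeSet he)⟩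
  have hle : H ≤ G := by
    rw [← SimpleGraph.edgeSet_subset_edgeSet]
    intro e he
    rcases hHG he with h | h
    · exact p.edges_subset_edgeSet h
    · exact q.edges_subset_edgeSet h
  have hac : H.IsAcyclic := by
    intro a c hc
    have h1 : (g : ℕ∞) ≤ c.length :=
      (hg.trans (SimpleGraph.egirth_anti hle)).trans (SimpleGraph.egirth_le_length hc)
    have h1' : g ≤ c.length := by exact_mod_cast h1
    have h2 : c.edges.toFinset ⊆ (p.edges ++ q.edges).toFinset := by
      intro e he
      rw [List.mem_toFinset] at he ⊢
      rw [List.mem_append]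
      exact hHG (c.edges_subset_edgeSet he)
    have h3 := Finset.card_le_card h2
    rw [List.toFinset_card_of_nodup hc.edges_nodup] at h3
    have h4 := List.toFinset_card_le (p.edges ++ q.edges)
    simp only [List.length_append, SimpleGraph.Walk.length_edges] at h3 h4
    omega
  have := (hac.subsingleton_path x y).elim ⟨p.transfer H hpe, hp.transfer hpe⟩
    ⟨q.transfer H hqe, hq.transfer hqe⟩
  have h5 : (p.transfer H hpe).support = (q.transfer H hqe).support := by
    rw [Subtype.ext_iff] at this
    simp only at this
    rw [this]
  rw [SimpleGraph.Walk.support_transfer, SimpleGraph.Walk.support_transfer] at h5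
  exact SimpleGraph.Walk.ext_support h5

theorem exists_enum [Fintype V] {G : SimpleGraph V} {r : ℕ} (hreg : IsRegular G r) (w x : V) :
    ∃ s : Fin r → V, Function.Injective s ∧ (∀ y, G.Adj x y ↔ ∃ a, s a = y) ∧
      (G.Adj x w → ∀ a, s a = w ↔ a.val = 0) := by
  classical
  have hc : Nat.card (G.neighborSet x) = r := by
    rw [Nat.card_coe_set_eq]; exact hreg x
  let e : Fin r ≃ G.neighborSet x := (Finite.equivFinOfCardEq hc).symm
  by_cases hw : G.Adj x w
  · have hr : 0 < r := (e.symm ⟨w, hw⟩).pos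
    let f : Fin r ≃ G.neighborSet x := (Equiv.swap ⟨0, hr⟩ (e.symm ⟨w, hw⟩)).trans e
    have hf0 : f ⟨0, hr⟩ = ⟨w, hw⟩ := by simp [f]
    refine ⟨fun a => f a, Subtype.val_injective.comp f.injective, ?_, ?_⟩
    · intro y
      constructor
      · intro h
        exact ⟨f.symm ⟨y, h⟩, by simp⟩
      · rintro ⟨a, rfl⟩
        exact (f a).2
    · intro _ a
      constructor
      · intro h
        have : f a = f ⟨0, hr⟩ := by rw [hf0]; exact Subtype.ext h
        rw [f.injective this]
      · intro h
        have : a = ⟨0, hr⟩ := Fin.ext h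
        show ((f a : G.neighborSet x) : V) = w
        rw [this, hf0]
  · refine ⟨fun a => e a, Subtype.val_injective.comp e.injective, ?_, fun h => absurd h hw⟩
    intro y
    constructor
    · intro h
      exact ⟨e.symm ⟨y, h⟩, by simp⟩
    · rintro ⟨a, rfl⟩
      exact (e a).2

/-- State (parent, current vertex) reached from `u` by following a word (read from its end). -/
def wordState {r : ℕ} (s : V → V → Fin r → V) (u : V) : List (Fin r) → V × V
  | [] => (u, u)
  | a :: l => ((wordState s u l).2, s (wordState s u l).1 (wordState s u l).2 a)

/-- The list of vertices visited when following a word. -/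
def wordSupp {r : ℕ} (s : V → V → Fin r → V) (u : V) : List (Fin r) → List V
  | [] => [u]
  | a :: l => (wordState s u (a :: l)).2 :: wordSupp s u l

/-- Words not using the backtracking letter, except possibly at the first step. -/
def ValidWord {r : ℕ} : List (Fin r) → Prop
  | [] => True
  | a :: l => ValidWord l ∧ (l = [] ∨ a.val ≠ 0)

/-- `s` is a system of enumerations of neighbours. -/
def IsEnum {r : ℕ} (G : SimpleGraph V) (s : V → V → Fin r → V) : Prop :=
  ∀ w x, Function.Injective (s w x) ∧ (∀ y, G.Adj x y ↔ ∃ a, s w x a = y) ∧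
      (G.Adj x w → ∀ a, s w x a = w ↔ a.val = 0)

theorem wordState_adj {r : ℕ} {G : SimpleGraph V} {s : V → V → Fin r → V} (hs : IsEnum G s)
    (u : V) (a : Fin r) (l : List (Fin r)) :
    G.Adj (wordState s u l).2 (wordState s u (a :: l)).2 :=
  ((hs _ _).2.1 _).2 ⟨a, rfl⟩

theorem wordSupp_eq_cons {r : ℕ} (s : V → V → Fin r → V) (u : V) (l : List (Fin r)) :
    ∃ t, wordSupp s u l = (wordState s u l).2 :: t := by
  cases l with
  | nil => exact ⟨[], rfl⟩
  | cons a l => exact ⟨_, rfl⟩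

theorem wordSupp_injective {r : ℕ} {G : SimpleGraph V} {s : V → V → Fin r → V} (hs : IsEnum G s)
    (u : V) : ∀ l l' : List (Fin r), wordSupp s u l = wordSupp s u l' → l = l' := by
  intro l
  induction l with
  | nil =>
    intro l' h
    cases l' with
    | nil => rfl
    | cons b l' =>
      obtain ⟨t, ht⟩ := wordSupp_eq_cons s u l'
      simp [wordSupp, ht] at h
  | cons a l ih =>
    intro l' h
    cases l' with
    | nil =>
      obtain ⟨t, ht⟩ := wordSupp_eq_cons s u l
      simp [wordSupp, ht] at h
    | cons b l' =>
      simp only [wordSupp, List.cons.injEq] at h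
      have h2 := ih l' h.2
      subst h2
      have h3 := h.1
      simp only [wordState] at h3
      rw [(hs _ _).1 h3]

theorem word_path {r : ℕ} {G : SimpleGraph V} {s : V → V → Fin r → V} (hs : IsEnum G s)
    {g : ℕ} (hg : (g : ℕ∞) ≤ G.egirth) (u : V) : ∀ l : List (Fin r), ValidWord l →
    l.length < g → ∃ p : G.Walk (wordState s u l).2 u, p.IsPath ∧ p.length = l.length ∧
      p.support = wordSupp s u l := by
  classical
  intro l
  induction l with
  | nil =>
    intro _ _
    exact ⟨SimpleGraph.Walk.nil, SimpleGraph.Walk.IsPath.nil, rfl, rfl⟩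
  | cons a l ih =>
    intro hv hl
    simp only [List.length_cons] at hl
    obtain ⟨p, hp, hpl, hps⟩ := ih hv.1 (by omega)
    have hadj := wordState_adj hs u a l
    refine ⟨SimpleGraph.Walk.cons hadj.symm p, ?_, by simp [hpl], by simp [hps, wordSupp]⟩
    rw [SimpleGraph.Walk.cons_isPath_iff]
    refine ⟨hp, fun hmem => ?_⟩
    rcases l with _ | ⟨b, l⟩
    · rw [hps] at hmem
      simp only [wordSupp, List.mem_singleton] at hmem
      exact hadj.ne hmem.symm
    · have hv2 : a.val ≠ 0 := by
        rcases hv.2 with h | h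
        · cases h
        · exact h
      have h1 : p.takeUntil _ hmem = SimpleGraph.Walk.cons hadj SimpleGraph.Walk.nil := by
        apply path_unique_of_girth hg _ _ (hp.takeUntil hmem)
        · simp [hadj.ne]
        · have := p.length_takeUntil_le_length hmem
          simp only [SimpleGraph.Walk.length_cons, SimpleGraph.Walk.length_nil]
          omega
      have h2 := p.take_spec hmem
      rw [h1] at h2
      have h3 : p.support = (wordState s u (b :: l)).2 :: (p.dropUntil _ hmem).support := by
        conv_lhs => rw [← h2]
        simp
      rw [hps, ← SimpleGraph.Walk.cons_tail_support (p.dropUntil _ hmem)] at h3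
      obtain ⟨t, ht⟩ := wordSupp_eq_cons s u l
      simp only [wordSupp, ht, List.cons.injEq] at h3
      have h4 := h3.2.1
      have h5 := wordState_adj hs u b l
      exact hv2 (((hs (wordState s u l).2 (wordState s u (b :: l)).2).2.2 h5.symm a).1 h4.symm)

theorem word_injective {r : ℕ} {G : SimpleGraph V} {s : V → V → Fin r → V} (hs : IsEnum G s)
    {g : ℕ} (hg : (g : ℕ∞) ≤ G.egirth) (u : V) (l l' : List (Fin r)) (hv : ValidWord l)
    (hv' : ValidWord l') (hl : l.length + l'.length < g)
    (h : (wordState s u l).2 = (wordState s u l').2) : l = l' := by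
  obtain ⟨p, hp, hpl, hps⟩ := word_path hs hg u l hv (by omega)
  obtain ⟨q, hq, hql, hqs⟩ := word_path hs hg u l' hv' (by omega)
  have h1 : p.copy h rfl = q := by
    apply path_unique_of_girth hg _ _ (by simpa using hp) hq
    simp only [SimpleGraph.Walk.length_copy]
    omega
  apply wordSupp_injective hs u
  rw [← hps, ← hqs, ← h1, SimpleGraph.Walk.support_copy]

/-- `φ` is a local isomorphism up to depth `k` around `x`. -/
def LocIso (G : SimpleGraph V) (φ : V → V) : ℕ → V → Prop
  | 0, _ => True
  | k + 1, x => (∀ y, G.Adj x y ↔ G.Adj (φ x) (φ y)) ∧ ∀ y, G.Adj x y → LocIso G φ k y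

theorem LocIso.pred {G : SimpleGraph V} {φ : V → V} :
    ∀ {k : ℕ} {x : V}, LocIso G φ (k + 1) x → LocIso G φ k x := by
  intro k
  induction k with
  | zero => intro x _; trivial
  | succ k ih =>
    intro x h
    exact ⟨h.1, fun y hy => ih (h.2 y hy)⟩

theorem LocIso.mono {G : SimpleGraph V} {φ : V → V} {k m : ℕ} (hkm : k ≤ m) {x : V}
    (h : LocIso G φ m x) : LocIso G φ k x := by
  induction m, hkm using Nat.le_induction with
  | base => exact h
  | succ m _ ih => exact ih h.pred

theorem exists_locIso [Fintype V] {r g : ℕ} {G : SimpleGraph V}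
    (hreg : IsRegular G r) (hg : (g : ℕ∞) ≤ G.egirth) (k : ℕ) (hk : 2 * k < g) (u v : V) :
    ∃ φ : Equiv.Perm V, φ u = v ∧ LocIso G φ k u := by
  classical
  choose s hs using fun w x => exists_enum hreg w x
  have hs : IsEnum G s := hs
  let A := {l : List (Fin r) // ValidWord l ∧ l.length ≤ k}
  have hinj : ∀ z : V, Function.Injective (fun l : A => (wordState s z l.1).2) := by
    intro z l l' h
    exact Subtype.ext (word_injective hs hg z _ _ l.2.1 l'.2.1
      (by have := l.2.2; have := l'.2.2; omega) h)
  have : Finite A := Finite.of_injective _ (hinj u)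
  obtain ⟨φ, hφ⟩ := Equiv.Perm.exists_extending_pair _ _ (hinj u) (hinj v)
  have hφ' : ∀ l : List (Fin r), ValidWord l → l.length ≤ k →
      φ (wordState s u l).2 = (wordState s v l).2 := fun l h1 h2 => hφ ⟨l, h1, h2⟩
  refine ⟨φ, hφ' [] trivial (by simp), ?_⟩
  have key : ∀ m (l : List (Fin r)), ValidWord l → l.length + m ≤ k →
      LocIso G φ m (wordState s u l).2 := by
    intro m
    induction m with
    | zero => intro l _ _; trivial
    | succ m ih =>
      intro l hv hl
      -- each letter leads to a matched valid word
      have hstep : ∀ a : Fin r, ∃ l' : List (Fin r), ValidWord l' ∧ l'.length ≤ l.length + 1 ∧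
          ∀ z, (wordState s z l').2 = s (wordState s z l).1 (wordState s z l).2 a := by
        intro a
        by_cases ha : l = [] ∨ a.val ≠ 0
        · exact ⟨a :: l, ⟨hv, ha⟩, by simp, fun z => rfl⟩
        · push Not at ha
          rcases l with _ | ⟨b, l⟩
          · exact absurd rfl ha.1
          · refine ⟨l, hv.1, by simp; omega, fun z => ?_⟩
            have h5 := wordState_adj hs z b l
            exact (((hs (wordState s z l).2 (wordState s z (b :: l)).2).2.2 h5.symm a).2
              ha.2).symm
      have hx := hφ' l hv (by omega)
      refine ⟨fun y => ?_, fun y hy => ?_⟩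
      · rw [hx]
        constructor
        · intro hy
          obtain ⟨a, rfl⟩ := ((hs (wordState s u l).1 _).2.1 y).1 hy
          obtain ⟨l', h1, h2, h3⟩ := hstep a
          rw [← h3 u, hφ' l' h1 (by omega), h3 v]
          exact ((hs _ _).2.1 _).2 ⟨a, rfl⟩
        · intro hy
          obtain ⟨a, ha⟩ := ((hs (wordState s v l).1 _).2.1 _).1 hy
          obtain ⟨l', h1, h2, h3⟩ := hstep a
          rw [← h3 v, ← hφ' l' h1 (by omega), h3 u] at ha
          have := φ.injective ha
          exact ((hs _ _).2.1 _).2 ⟨a, this⟩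
      · obtain ⟨a, rfl⟩ := ((hs (wordState s u l).1 _).2.1 y).1 hy
        obtain ⟨l', h1, h2, h3⟩ := hstep a
        rw [← h3 u]
        exact ih l' h1 (by omega)
  exact key k [] trivial (by simp)

theorem relevant_iff (G : SimpleGraph V) (S : V → Set ℕ) (i : ℕ) (v : V) :
    Relevant G S i v ↔ (i = 0 ∧ 0 ∈ S v) ∨
    (i ∈ S v ∧ (∀ j, j < i → ¬ Relevant G S j v) ∧
      (∃! u, G.Adj v u ∧ ∃ j, j < i ∧ Relevant G S j u)) := by
  unfold Relevant
  rw [Nat.strongRecOn_eq]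
  simp only [exists_prop]

theorem existsUnique_perm (φ : Equiv.Perm V) (P Q : V → Prop) (h : ∀ x, P x ↔ Q (φ x)) :
    (∃! x, P x) ↔ ∃! x, Q x := by
  simp only [h]
  constructor
  · rintro ⟨x, hx, hu⟩
    refine ⟨φ x, hx, fun y hy => ?_⟩
    have := hu (φ.symm y) (by simpa using hy)
    rw [← this, Equiv.apply_symm_apply]
  · rintro ⟨x, hx, hu⟩
    refine ⟨φ.symm x, by simpa using hx, fun y hy => ?_⟩
    rw [← hu (φ y) hy, Equiv.symm_apply_apply]

theorem relevant_transport {G : SimpleGraph V} (φ : Equiv.Perm V) (S : V → Set ℕ) :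
    ∀ (i : ℕ) (x : V), LocIso G φ i x →
      (Relevant G (fun y => S (φ y)) i x ↔ Relevant G S i (φ x)) := by
  intro i
  induction i using Nat.strong_induction_on with
  | _ i ih =>
    intro x hx
    rw [relevant_iff, relevant_iff G S]
    rcases i with _ | i
    · simp
    · have h1 : ∀ j, j < i + 1 →
          (Relevant G (fun y => S (φ y)) j x ↔ Relevant G S j (φ x)) :=
        fun j hj => ih j hj x (hx.mono hj.le)
      have h2 : (∃! y, G.Adj x y ∧ ∃ j, j < i + 1 ∧ Relevant G (fun y => S (φ y)) j y) ↔
          (∃! y, G.Adj (φ x) y ∧ ∃ j, j < i + 1 ∧ Relevant G S j y) := by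
        apply existsUnique_perm φ
        intro y
        rw [← hx.1 y]
        refine and_congr_right fun hy => exists_congr fun j => and_congr_right fun hj => ?_
        exact ih j hj y ((hx.2 y hy).mono (by omega))
      rw [h2]
      have h3 : (∀ j, j < i + 1 → ¬ Relevant G (fun y => S (φ y)) j x) ↔
          (∀ j, j < i + 1 → ¬ Relevant G S j (φ x)) :=
        forall_congr' fun j => forall_congr' fun hj => not_congr (h1 j hj)
      rw [h3]

theorem blue_transport {G : SimpleGraph V} (φ : Equiv.Perm V) (S : V → Set ℕ) (l : ℕ) (x : V)
    (hx : LocIso G φ (l + 1) x) :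
    x ∈ Blue G (fun y => S (φ y)) l ↔ φ x ∈ Blue G S l := by
  simp only [Blue, Set.mem_ofPred_eq, RelevantLe]
  apply and_congr
  · apply not_congr
    exact exists_congr fun i => and_congr_right fun hi =>
      relevant_transport φ S i x (hx.mono (by omega))
  · apply existsUnique_perm φ
    intro y
    rw [← hx.1 y]
    refine and_congr_right fun hy => exists_congr fun j => and_congr_right fun hj => ?_
    exact relevant_transport φ S j y ((hx.2 y hy).mono hj)

theorem relevant_measurable [Fintype V] (G : SimpleGraph V) (m : MeasurableSpace (V → ℕ → Bool))
    (l : ℕ) (hm : ∀ (w : V) (j : ℕ), j ≤ l → MeasurableSet[m] {ω | ω w j = true}) :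
    ∀ (i : ℕ), i ≤ l → ∀ v : V, Measurable[m] (fun ω => Relevant G (labels ω) i v) := by
  intro i
  induction i using Nat.strong_induction_on with
  | _ i ih =>
    intro hi v
    simp only [relevant_iff G _ i, ExistsUnique]
    have h0 : ∀ j, j ≤ l → ∀ w, Measurable[m] (fun ω : V → ℕ → Bool => j ∈ labels ω w) :=
      fun j hj w => measurableSet_setOfPred.1 (hm w j hj)
    have h1 : ∀ w, Measurable[m] (fun ω : V → ℕ → Bool => G.Adj v w ∧ ∃ j, j < i ∧
        Relevant G (labels ω) j w) := by
      intro w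
      refine measurable_const.and (Measurable.exists fun j => ?_)
      by_cases hj : j < i
      · exact measurable_const.and (ih j hj (by omega) w)
      · simp only [hj, false_and]
        exact measurable_const
    refine (measurable_const.and (h0 0 (by omega) v)).or ((h0 i hi v).and (Measurable.and ?_ ?_))
    · refine Measurable.forall fun j => ?_
      by_cases hj : j < i
      · exact measurable_const.imp (ih j hj (by omega) v).not
      · simp only [hj, false_imp_iff]
        exact measurable_const
    · refine Measurable.exists fun w => (h1 w).and (Measurable.forall fun y => ?_)
      exact (h1 y).imp measurable_const

theorem relevantLe_measurable [Fintype V] (G : SimpleGraph V)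
    (m : MeasurableSpace (V → ℕ → Bool))
    (l : ℕ) (hm : ∀ (w : V) (j : ℕ), j ≤ l → MeasurableSet[m] {ω | ω w j = true}) (v : V) :
    Measurable[m] (fun ω => RelevantLe G (labels ω) l v) := by
  refine Measurable.exists fun j => ?_
  by_cases hj : j ≤ l
  · exact measurable_const.and (relevant_measurable G m l hm j hj v)
  · simp only [hj, false_and]
    exact measurable_const

theorem BEv_measurable [Fintype V] (G : SimpleGraph V) (m : MeasurableSpace (V → ℕ → Bool))
    (l : ℕ) (hm : ∀ (w : V) (j : ℕ), j ≤ l → MeasurableSet[m] {ω | ω w j = true}) (v : V) :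
    MeasurableSet[m] (BEv G l v) := by
  refine measurableSet_setOfPred.2 ?_
  have h := relevantLe_measurable G m l hm
  simp only [Blue, Set.mem_ofPred_eq, ExistsUnique]
  refine (h v).not.and (Measurable.exists fun w => ?_)
  exact (measurable_const.and (h w)).and (Measurable.forall fun y =>
    (measurable_const.and (h y)).imp measurable_const)

theorem coord_measurable (w : V) (j : ℕ) :
    MeasurableSet {ω : V → ℕ → Bool | ω w j = true} := by
  have h : Measurable (fun ω : V → ℕ → Bool => ω w j) := by fun_prop
  exact h (MeasurableSet.singleton true)

theorem coord_iIndepFun {μ : Measure (V → ℕ → Bool)} {p₀ p : ℝ} (hμ : IsLabelMeasure μ p₀ p) :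
    iIndepFun (fun (q : V × ℕ) (ω : V → ℕ → Bool) => ω q.1 q.2) μ := by
  rw [iIndepFun_iff_iIndep]
  refine iIndep_of_iIndep_of_le ((iIndepSet_iff_iIndep _ _).1 hμ.2.1) fun q => ?_
  rintro A ⟨B, -, rfl⟩
  have h : @Measurable _ _ (MeasurableSpace.generateFrom
      {{ω : V → ℕ → Bool | ω q.1 q.2 = true}}) _ (fun ω : V → ℕ → Bool => ω q.1 q.2) := by
    refine measurable_to_bool ?_
    exact MeasurableSpace.measurableSet_generateFrom (by rfl)
  exact h trivial

theorem BEv_invariant [Fintype V] {r g : ℕ} {G : SimpleGraph V}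
    (hreg : IsRegular G r) (hg : (g : ℕ∞) ≤ G.egirth)
    {p₀ p : ℝ} {μ : Measure (V → ℕ → Bool)} (hμ : IsLabelMeasure μ p₀ p)
    (l : ℕ) (hl : 2 * (l + 1) < g) (u v : V) : μ (BEv G l u) = μ (BEv G l v) := by
  obtain ⟨φ, hφ, hloc⟩ := exists_locIso hreg hg (l + 1) hl u v
  have := hμ.1
  have hB : MeasurableSet (BEv G l u) :=
    BEv_measurable G _ l (fun w j _ => coord_measurable w j) u
  let F : (V → ℕ → Bool) → (V × ℕ → Bool) := fun ω q => ω q.1 q.2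
  let F' : (V → ℕ → Bool) → (V × ℕ → Bool) := fun ω q => ω (φ q.1) q.2
  let C : (V × ℕ → Bool) → (V → ℕ → Bool) := fun η v i => η (v, i)
  have hF : Measurable F := by fun_prop
  have hF' : Measurable F' := by fun_prop
  have hC : Measurable C := by fun_prop
  have hi := coord_iIndepFun hμ
  have hi' : iIndepFun (fun (q : V × ℕ) (ω : V → ℕ → Bool) => ω (φ q.1) q.2) μ := by
    have hinj : Function.Injective (fun q : V × ℕ => ((φ q.1, q.2) : V × ℕ)) := by
      rintro ⟨a, b⟩ ⟨c, d⟩ h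
      simp only [Prod.mk.injEq, EmbeddingLike.apply_eq_iff_eq] at h
      rw [h.1, h.2]
    exact iIndepFun.precomp hinj hi
  have e1 := iIndepFun.map_fun_eq_infinitePi_map (fun q => by fun_prop) hi
  have e2 := iIndepFun.map_fun_eq_infinitePi_map (fun q => by fun_prop) hi'
  have hmarg : ∀ q : V × ℕ, μ.map (fun ω : V → ℕ → Bool => ω q.1 q.2) =
      μ.map (fun ω : V → ℕ → Bool => ω (φ q.1) q.2) := by
    intro q
    have key : ∀ w : V, ∀ b : Bool, μ.map (fun ω : V → ℕ → Bool => ω w q.2) {b} =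
        if b then ENNReal.ofReal (if q.2 = 0 then p₀ else p)
          else 1 - ENNReal.ofReal (if q.2 = 0 then p₀ else p) := by
      intro w b
      rw [Measure.map_apply (by fun_prop) (MeasurableSet.singleton b)]
      cases b
      · have : (fun ω : V → ℕ → Bool => ω w q.2) ⁻¹' {false} = {ω | ω w q.2 = true}ᶜ := by
          ext ω; simp
        rw [this, prob_compl_eq_one_sub (coord_measurable w q.2), hμ.2.2]
        simp
      · have : (fun ω : V → ℕ → Bool => ω w q.2) ⁻¹' {true} = {ω | ω w q.2 = true} := by
          ext ω; simp
        rw [this, hμ.2.2]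
        simp
    refine Measure.ext_of_singleton fun b => ?_
    rw [key, key]
  have e3 : μ.map F = μ.map F' := by
    show μ.map (fun (ω : V → ℕ → Bool) (q : V × ℕ) => ω q.1 q.2) =
      μ.map (fun (ω : V → ℕ → Bool) (q : V × ℕ) => ω (φ q.1) q.2)
    rw [e1, e2]
    congr 1
    funext q
    exact hmarg q
  have h1 : F ⁻¹' (C ⁻¹' BEv G l u) = BEv G l u := rfl
  have h2 : F' ⁻¹' (C ⁻¹' BEv G l u) = BEv G l v := by
    ext ω
    have := blue_transport φ (labels ω) l u hloc
    rw [hφ] at this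
    exact this
  rw [← h1, ← Measure.map_apply hF (hC hB), e3, Measure.map_apply hF' (hC hB), h2]

/-- `v` carries label `i` and no neighbour of `v` does. -/
def CEv (G : SimpleGraph V) (i : ℕ) (v : V) : Set (V → ℕ → Bool) :=
  {ω | ω v i = true ∧ ∀ x, G.Adj v x → ω x i = false}

open Classical in
/-- Coordinate events used for describing `CEv`. -/
def coordSet (v : V) (q : V × ℕ) : Set (V → ℕ → Bool) :=
  if q.1 = v then {ω | ω q.1 q.2 = true} else {ω | ω q.1 q.2 = true}ᶜ

open Classical in
/-- Coordinates used for describing `CEv`. -/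
noncomputable def coordIdx [Fintype V] (G : SimpleGraph V) (i : ℕ) (v : V) : Finset (V × ℕ) :=
  (insert v (G.neighborFinset v)).image (fun x => (x, i))

theorem CEv_eq [Fintype V] (G : SimpleGraph V) (i : ℕ) (v : V) :
    CEv G i v = ⋂ q ∈ coordIdx G i v, coordSet v q := by
  classical
  ext ω
  simp only [CEv, coordIdx, Set.mem_ofPred_eq, Finset.mem_image, Finset.mem_insert,
    SimpleGraph.mem_neighborFinset, Set.mem_iInter]
  constructor
  · rintro ⟨h1, h2⟩ q ⟨x, hx, rfl⟩
    rcases hx with rfl | hx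
    · simpa [coordSet] using h1
    · simpa [coordSet, hx.ne'] using h2 x hx
  · intro h
    refine ⟨?_, fun x hx => ?_⟩
    · simpa [coordSet] using h (v, i) ⟨v, Or.inl rfl, rfl⟩
    · simpa [coordSet, hx.ne'] using h (x, i) ⟨x, Or.inr hx, rfl⟩

theorem coordSet_measurable (v : V) (q : V × ℕ) :
    MeasurableSet[MeasurableSpace.generateFrom {{ω : V → ℕ → Bool | ω q.1 q.2 = true}}]
      (coordSet v q) := by
  have h : MeasurableSet[MeasurableSpace.generateFrom {{ω : V → ℕ → Bool | ω q.1 q.2 = true}}]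
    {ω : V → ℕ → Bool | ω q.1 q.2 = true} :=
      MeasurableSpace.measurableSet_generateFrom (by rfl)
  unfold coordSet
  split_ifs
  · exact h
  · exact MeasurableSet.compl h

theorem CEv_prob [Fintype V] {r : ℕ} {G : SimpleGraph V} (hreg : IsRegular G r)
    {p₀ p : ℝ} (hp₀ : p₀ ∈ Ioo (0 : ℝ) 1) (hp : p ∈ Ioo (0 : ℝ) 1)
    {μ : Measure (V → ℕ → Bool)} (hμ : IsLabelMeasure μ p₀ p) (i : ℕ) (v : V) :
    (μ (CEv G i v)).toReal =
      (if i = 0 then p₀ else p) * (1 - (if i = 0 then p₀ else p)) ^ r := by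
  classical
  have := hμ.1
  set t : ℝ := if i = 0 then p₀ else p with ht
  have ht0 : 0 ≤ t := by rw [ht]; split_ifs; exacts [hp₀.1.le, hp.1.le]
  have hcard : (G.neighborFinset v).card = r := by
    rw [← hreg v, Set.ncard_eq_toFinset_card']
    rfl
  rw [CEv_eq, ((iIndepSet_iff_iIndep _ _).1 hμ.2.1).meas_biInter
    (fun q _ => coordSet_measurable v q), ENNReal.toReal_prod, coordIdx,
    Finset.prod_image (fun x _ y _ h => by simpa using h),
    Finset.prod_insert (by simp)]
  have h1 : (μ (coordSet v (v, i))).toReal = t := by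
    simp only [coordSet, if_true]
    rw [hμ.2.2, ENNReal.toReal_ofReal ht0]
  have h2 : ∀ x ∈ G.neighborFinset v, (μ (coordSet v (x, i))).toReal = 1 - t := by
    intro x hx
    rw [SimpleGraph.mem_neighborFinset] at hx
    simp only [coordSet, if_neg hx.ne']
    have := probReal_compl_eq_one_sub (μ := μ) (coord_measurable x i)
    simp only [Measure.real] at this
    rw [this, hμ.2.2, ENNReal.toReal_ofReal ht0]
  rw [h1, Finset.prod_congr rfl h2, Finset.prod_const, hcard]

theorem CEv_indep [Fintype V] {G : SimpleGraph V} {p₀ p : ℝ}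
    {μ : Measure (V → ℕ → Bool)} (hμ : IsLabelMeasure μ p₀ p) (l : ℕ) (v : V) :
    μ (BEv G l v ∩ CEv G (l + 1) v) = μ (BEv G l v) * μ (CEv G (l + 1) v) := by
  let m : V × ℕ → MeasurableSpace (V → ℕ → Bool) := fun q =>
    MeasurableSpace.generateFrom {{ω : V → ℕ → Bool | ω q.1 q.2 = true}}
  have hle : ∀ q, m q ≤ (inferInstance : MeasurableSpace (V → ℕ → Bool)) := by
    intro q
    refine MeasurableSpace.generateFrom_le ?_
    rintro A rfl
    exact coord_measurable _ _
  have hdisj : Disjoint {q : V × ℕ | q.2 ≤ l} {q : V × ℕ | q.2 = l + 1} := by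
    rw [Set.disjoint_left]
    rintro q h1 h2
    simp only [Set.mem_ofPred_eq] at h1 h2
    omega
  have hind := indep_iSup_of_disjoint hle ((iIndepSet_iff_iIndep _ _).1 hμ.2.1) hdisj
  refine (Indep_iff _ _ _).1 hind _ _ ?_ ?_
  · refine BEv_measurable G _ l (fun w j hj => ?_) v
    have h : m (w, j) ≤ ⨆ q ∈ {q : V × ℕ | q.2 ≤ l}, m q :=
      le_iSup₂_of_le (f := fun q (_ : q ∈ {q : V × ℕ | q.2 ≤ l}) => m q) (w, j) hj le_rfl
    exact h _ (MeasurableSpace.measurableSet_generateFrom (by rfl))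
  · rw [CEv_eq]
    refine Finset.measurableSet_biInter _ fun q hq => ?_
    have hq' : q ∈ {q : V × ℕ | q.2 = l + 1} := by
      simp only [coordIdx, Finset.mem_image] at hq
      obtain ⟨x, -, rfl⟩ := hq
      rfl
    have h : m q ≤ ⨆ q ∈ {q : V × ℕ | q.2 = l + 1}, m q :=
      le_iSup₂_of_le (f := fun q (_ : q ∈ {q : V × ℕ | q.2 = l + 1}) => m q) q hq' le_rfl
    exact h _ (coordSet_measurable v q)

/-- The sufficient events for membership of `v` in `P̄` with relevant label `i`. -/
def AEv (G : SimpleGraph V) (i : ℕ) (v : V) : Set (V → ℕ → Bool) :=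
  if i = 0 then CEv G 0 v else BEv G (i - 1) v ∩ CEv G i v

theorem AEv_relevant {G : SimpleGraph V} {i : ℕ} {v : V} {ω : V → ℕ → Bool}
    (h : ω ∈ AEv G i v) : Relevant G (labels ω) i v := by
  rw [relevant_iff]
  rcases i with _ | i
  · exact Or.inl ⟨rfl, h.1⟩
  · obtain ⟨⟨h1, h2⟩, h3⟩ := h
    refine Or.inr ⟨h3.1, fun j hj hr => h1 ⟨j, by omega, hr⟩, ?_⟩
    simpa only [RelevantLe, Nat.add_sub_cancel, Nat.lt_succ_iff] using h2

theorem relevant_mem {G : SimpleGraph V} {S : V → Set ℕ} {i : ℕ} {v : V}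
    (h : Relevant G S i v) : i ∈ S v := by
  rw [relevant_iff] at h
  rcases h with ⟨rfl, h⟩ | h
  · exact h
  · exact h.1

theorem relevant_not_lt {G : SimpleGraph V} {S : V → Set ℕ} {i j : ℕ} {v : V}
    (hi : Relevant G S i v) (hj : Relevant G S j v) : ¬ j < i := by
  intro hlt
  rw [relevant_iff] at hi
  rcases hi with ⟨rfl, -⟩ | hi
  · omega
  · exact hi.2.1 j hlt hj

theorem relevant_unique {G : SimpleGraph V} {S : V → Set ℕ} {i j : ℕ} {v : V}
    (hi : Relevant G S i v) (hj : Relevant G S j v) : i = j := by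
  have h1 := relevant_not_lt hi hj
  have h2 := relevant_not_lt hj hi
  omega

theorem AEv_subset {G : SimpleGraph V} {N i : ℕ} (hi : i ≤ N) {v : V} {ω : V → ℕ → Bool}
    (h : ω ∈ AEv G i v) : v ∈ Pbar G (labels ω) N := by
  have hr := AEv_relevant h
  refine ⟨⟨i, hi, hr⟩, fun x hx j hj hjx => ?_⟩
  have hij := relevant_unique hr hj
  subst hij
  have hC : ω ∈ CEv G i v := by
    unfold AEv at h
    split_ifs at h with h0
    · rw [h0]; exact h
    · exact h.2
  have h1 := hC.2 x hx
  have h2 : ω x i = true := relevant_mem hjx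
  rw [h1] at h2
  cases h2

theorem CEv_measurable [Fintype V] (G : SimpleGraph V) (i : ℕ) (v : V) :
    MeasurableSet (CEv G i v) := by
  rw [CEv_eq]
  refine Finset.measurableSet_biInter _ fun q _ => ?_
  unfold coordSet
  split_ifs
  · exact coord_measurable _ _
  · exact (coord_measurable _ _).compl

theorem AEv_measurable [Fintype V] (G : SimpleGraph V) (i : ℕ) (v : V) :
    MeasurableSet (AEv G i v) := by
  unfold AEv
  split_ifs
  · exact CEv_measurable _ _ _
  · exact (BEv_measurable G _ _ (fun w j _ => coord_measurable w j) v).inter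
      (CEv_measurable _ _ _)

theorem Pbar_measurable [Fintype V] (G : SimpleGraph V) (N : ℕ) (v : V) :
    MeasurableSet {ω : V → ℕ → Bool | v ∈ Pbar G (labels ω) N} := by
  refine measurableSet_setOfPred.2 ?_
  simp only [Pbar, Set.mem_ofPred_eq]
  have h : ∀ i w, Measurable (fun ω : V → ℕ → Bool => Relevant G (labels ω) i w) :=
    fun i w => relevant_measurable G _ i (fun w j _ => coord_measurable w j) i le_rfl w
  refine (relevantLe_measurable G _ N (fun w j _ => coord_measurable w j) v).and
    (Measurable.forall fun x => measurable_const.imp (Measurable.forall fun i =>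
      (h i v).imp (h i x).not))

theorem expected_size_pbar
    [Fintype V] (r g : ℕ) (G : SimpleGraph V)
    (hreg : IsRegular G r) (hg : (g : ℕ∞) ≤ G.egirth)
    (p₀ p : ℝ) (hp₀ : p₀ ∈ Ioo (0 : ℝ) 1) (hp : p ∈ Ioo (0 : ℝ) 1)
    (μ : Measure (V → ℕ → Bool)) (hμ : IsLabelMeasure μ p₀ p)
    (N : ℕ) (hN : 1 ≤ N) (hNg : 2 * N < g - 3)
    (u : V) :
    p₀ * (1 - p₀) ^ r * (Fintype.card V : ℝ)
      + ∑ i ∈ Finset.Icc 1 N,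
          p * (1 - p) ^ r * (μ (BEv G (i - 1) u)).toReal * (Fintype.card V : ℝ)
      ≤ ∫ ω, ((Pbar G (labels ω) N).ncard : ℝ) ∂μ := by
  classical
  have hprob := hμ.1
  have hint : ∫ ω, ((Pbar G (labels ω) N).ncard : ℝ) ∂μ =
      ∑ v : V, μ.real {ω | v ∈ Pbar G (labels ω) N} := by
    have h1 : ∀ ω : V → ℕ → Bool, ((Pbar G (labels ω) N).ncard : ℝ) =
        ∑ v : V, ({ω | v ∈ Pbar G (labels ω) N} : Set (V → ℕ → Bool)).indicator 1 ω := by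
      intro ω
      simp only [Set.indicator_apply, Set.mem_ofPred_eq, Pi.one_apply]
      rw [Finset.sum_boole, Set.ncard_eq_toFinset_card']
      congr 2
      ext v
      simp
    simp only [h1]
    rw [integral_finsetSum]
    · exact Finset.sum_congr rfl fun v _ => integral_indicator_one (Pbar_measurable G N v)
    · intro v _
      exact (integrable_const (1 : ℝ)).indicator (Pbar_measurable G N v)
  have hv : ∀ v : V, p₀ * (1 - p₀) ^ r + ∑ i ∈ Finset.Icc 1 N,
      p * (1 - p) ^ r * (μ (BEv G (i - 1) u)).toReal ≤
        μ.real {ω | v ∈ Pbar G (labels ω) N} := by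
    intro v
    have hdisj : (↑(Finset.range (N + 1)) : Set ℕ).PairwiseDisjoint (fun i => AEv G i v) := by
      intro i _ j _ hij
      refine Set.disjoint_left.2 fun ω h1 h2 => hij ?_
      exact relevant_unique (AEv_relevant h1) (AEv_relevant h2)
    have hU := measureReal_biUnion_finset (μ := μ) hdisj (fun i _ => AEv_measurable G i v)
    have hsub : (⋃ i ∈ Finset.range (N + 1), AEv G i v) ⊆
        {ω | v ∈ Pbar G (labels ω) N} := by
      intro ω hω
      simp only [Set.mem_iUnion, Finset.mem_range] at hω
      obtain ⟨i, hi, h⟩ := hω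
      exact AEv_subset (by omega) h
    refine le_trans (le_of_eq ?_) (measureReal_mono (μ := μ) hsub)
    rw [hU, Finset.sum_range_succ', add_comm]
    congr 1
    · rw [Finset.sum_bij (fun i _ => i - 1) (t := Finset.range N)
        (g := fun k => μ.real (AEv G (k + 1) v))]
      · intro i hi
        rw [Finset.mem_Icc] at hi
        rw [Finset.mem_range]
        omega
      · intro i hi j hj h
        rw [Finset.mem_Icc] at hi hj
        omega
      · intro k hk
        rw [Finset.mem_range] at hk
        exact ⟨k + 1, by rw [Finset.mem_Icc]; omega, by simp⟩
      · intro i hi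
        rw [Finset.mem_Icc] at hi
        obtain ⟨k, rfl⟩ : ∃ k, i = k + 1 := ⟨i - 1, by omega⟩
        simp only [Nat.add_sub_cancel]
        have hA : AEv G (k + 1) v = BEv G k v ∩ CEv G (k + 1) v := by
          simp [AEv]
        have hC := CEv_prob hreg hp₀ hp hμ (k + 1) v
        simp only [Nat.add_eq_zero_iff, one_ne_zero, and_false, if_false] at hC
        rw [Measure.real, hA, CEv_indep hμ, ENNReal.toReal_mul, hC,
          BEv_invariant hreg hg hμ k (by omega) u v]
        ring
    · have hC := CEv_prob hreg hp₀ hp hμ 0 v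
      simp only [if_true] at hC
      rw [← hC]
      simp [AEv, Measure.real]
  rw [hint]
  calc _ = ∑ v : V, (p₀ * (1 - p₀) ^ r + ∑ i ∈ Finset.Icc 1 N,
      p * (1 - p) ^ r * (μ (BEv G (i - 1) u)).toReal) := by
        rw [Finset.sum_const, Finset.card_univ, nsmul_eq_mul, ← Finset.sum_mul]
        ring
    _ ≤ _ := Finset.sum_le_sum fun v _ => hv v

end InducedForest
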